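/- arXiv:2002.06494 — 3 statements merged into one kernel-verified Lean document; each statement's English description precedes it below -/
import Mathlib

section
/- (Zonotope containment, sufficient condition.) Let c₁, c₂ ∈ ℝ^q, G₁ ∈ ℝ^{q×r}, G₂ ∈ ℝ^{q×s}. If there exist a matrix Γ ∈ ℝ^{s×r} and a vector γ ∈ ℝ^s such that G₁ = G₂Γ, c₂ − c₁ = G₂γ, and for every row index i ∈ {1,…,s} the absolute row sum satisfies Σ_{j=1}^{r} |Γ_{ij}| + |γ_i| ≤ 1 (i.e. ‖[Γ, γ]‖_∞ ≤ 1), then Z(c₁,G₁) ⊆ Z(c₂,G₂). -/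
/-- The zonotope `Z(c, G) = { c + G ξ : ‖ξ‖_∞ ≤ 1 }`. -/
def zonotope {n ι : Type*} [Fintype ι] (c : n → ℝ) (G : Matrix n ι ℝ) : Set (n → ℝ) :=
  {x | ∃ ξ : ι → ℝ, (∀ i, |ξ i| ≤ 1) ∧ x = c + G.mulVec ξ}

/-!
A zonotope is the image of a unit cube under an affine map. The hypotheses `G₁ = G₂ Γ` and
`c₁ = c₂ - G₂ γ` say that the map defining `Z(c₁, G₁)` factors as `ξ ↦ Γ ξ - γ` followed by the map
`y ↦ c₂ + G₂ y` defining `Z(c₂, G₂)`, and the row-sum bound says that the first factor maps the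
cube into the cube.
-/

open Matrix

theorem abs_dotProduct_le_sum_abs {ι R : Type*} [Fintype ι] [Ring R] [LinearOrder R]
    [IsOrderedRing R] (v : ι → R) {w : ι → R} (hw : ∀ i, |w i| ≤ 1) :
    |v ⬝ᵥ w| ≤ ∑ i, |v i| :=
  calc
    |∑ i, v i * w i| ≤ ∑ i, |v i * w i| := Finset.abs_sum_le_sum_abs _ _
    _ = ∑ i, |v i| * |w i| := by simp only [abs_mul]
    _ ≤ ∑ i, |v i| := Finset.sum_le_sum fun i _ => mul_le_of_le_one_right (abs_nonneg _) (hw i)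

section Zonotope

variable {n ι κ : Type*} [Fintype ι]

theorem zonotope_eq_image_Icc (c : n → ℝ) (G : Matrix n ι ℝ) :
    zonotope c G = (fun ξ => c + G *ᵥ ξ) '' Set.Icc (-1) 1 := by
  ext x
  simp only [zonotope, Set.mem_ofPred_eq, Set.mem_image, Set.mem_Icc, Pi.le_def, ← forall_and,
    Pi.neg_apply, Pi.one_apply, ← abs_le, eq_comm]

theorem zonotope_subset_Icc (c : n → ℝ) (G : Matrix n ι ℝ) :
    zonotope c G ⊆ Set.Icc (fun i => c i - ∑ j, |G i j|) (fun i => c i + ∑ j, |G i j|) := by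
  rintro _ ⟨ξ, hξ, rfl⟩
  have hdev (i : n) : |(G *ᵥ ξ) i| ≤ ∑ j, |G i j| := abs_dotProduct_le_sum_abs (G i) hξ
  constructor <;> intro i <;> simp only [Pi.add_apply] <;> linarith [abs_le.mp (hdev i)]

theorem zonotope_add_mulVec_mul [Fintype κ] (c : n → ℝ) (G : Matrix n κ ℝ) (γ : κ → ℝ)
    (Γ : Matrix κ ι ℝ) :
    zonotope (c + G *ᵥ γ) (G * Γ) = (fun y => c + G *ᵥ y) '' zonotope γ Γ := by
  simp only [zonotope_eq_image_Icc, Set.image_image, mulVec_add, mulVec_mulVec, add_assoc]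

theorem zonotope_subset_Icc_neg_one_one {c : n → ℝ} {G : Matrix n ι ℝ}
    (hrow : ∀ i, ∑ j, |G i j| + |c i| ≤ 1) : zonotope c G ⊆ Set.Icc (-1) 1 := by
  refine (zonotope_subset_Icc c G).trans (Set.Icc_subset_Icc (fun i => ?_) fun i => ?_)
  · simp only [Pi.neg_apply, Pi.one_apply]
    linarith [hrow i, neg_abs_le (c i)]
  · simp only [Pi.one_apply]
    linarith [hrow i, le_abs_self (c i)]

theorem zonotope_containment_general [Fintype κ] (c₁ c₂ : n → ℝ) (G₁ : Matrix n ι ℝ)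
    (G₂ : Matrix n κ ℝ) (Γ : Matrix κ ι ℝ) (γ : κ → ℝ) (hG : G₁ = G₂ * Γ)
    (hc : c₂ - c₁ = G₂ *ᵥ γ) (hrow : ∀ i, ∑ j, |Γ i j| + |γ i| ≤ 1) :
    zonotope c₁ G₁ ⊆ zonotope c₂ G₂ := by
  have hc₁ : c₁ = c₂ + G₂ *ᵥ (-γ) := by rw [mulVec_neg, ← hc]; abel
  have hcube : zonotope (-γ) Γ ⊆ Set.Icc (-1) 1 :=
    zonotope_subset_Icc_neg_one_one fun i => by simpa only [Pi.neg_apply, abs_neg] using hrow i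
  calc
    zonotope c₁ G₁ = (fun y => c₂ + G₂ *ᵥ y) '' zonotope (-γ) Γ := by
      rw [hc₁, hG, zonotope_add_mulVec_mul]
    _ ⊆ (fun y => c₂ + G₂ *ᵥ y) '' Set.Icc (-1) 1 := Set.image_mono hcube
    _ = zonotope c₂ G₂ := (zonotope_eq_image_Icc c₂ G₂).symm

end Zonotope

/-- Zonotope containment (sufficient condition): if `G₁ = G₂ Γ`, `c₂ - c₁ = G₂ γ`, and each
absolute row sum of `[Γ, γ]` is at most `1`, then `Z(c₁, G₁) ⊆ Z(c₂, G₂)`. -/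
theorem zonotope_containment {q r s : ℕ} (c₁ c₂ : Fin q → ℝ)
    (G₁ : Matrix (Fin q) (Fin r) ℝ) (G₂ : Matrix (Fin q) (Fin s) ℝ)
    (Γ : Matrix (Fin s) (Fin r) ℝ) (γ : Fin s → ℝ)
    (hG : G₁ = G₂ * Γ) (hc : c₂ - c₁ = G₂.mulVec γ)
    (hrow : ∀ i : Fin s, (∑ j : Fin r, |Γ i j|) + |γ i| ≤ 1) :
    zonotope c₁ G₁ ⊆ zonotope c₂ G₂ :=
  zonotope_containment_general c₁ c₂ G₁ G₂ Γ γ hG hc hrow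
end

section
/- (Minkowski cancellation for convex sets.) Let A, C ⊆ ℝ^n be nonempty compact convex sets and let B ⊆ ℝ^n be a closed convex set. If A ⊕ C ⊆ B ⊕ C, then A ⊆ B. -/
open Pointwise

/-!
If `A + C ⊆ B + C` with `B` convex, then adding copies of `A` one at a time gives
`k • A + C ⊆ k • B + C` for every positive integer `k`: each copy of `A` is traded for a copy of
`B` while the summand `C` survives, and convexity merges the `k` copies of `B` into `k • B`.
Dividing by `k` makes the bounded set `C` negligible, so every point of `A` is a limit of points
of `B`.
-/

open Bornology Filter Topology

theorem natCast_smul_add_subset_of_add_subset {𝕜 E : Type*} [Field 𝕜] [LinearOrder 𝕜]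
    [IsStrictOrderedRing 𝕜] [AddCommGroup E] [Module 𝕜 E] {A B C : Set E} (hB : Convex 𝕜 B)
    (h : A + C ⊆ B + C) {k : ℕ} (hk : 1 ≤ k) : (k : 𝕜) • A + C ⊆ (k : 𝕜) • B + C := by
  induction k, hk using Nat.le_induction with
  | base => simpa only [Nat.cast_one, one_smul] using h
  | succ k _ ih =>
    rw [Nat.cast_succ]
    calc
      ((k : 𝕜) + 1) • A + C ⊆ (k : 𝕜) • A + A + C := by
        simpa only [one_smul] using Set.add_subset_add_right (Set.add_smul_subset (k : 𝕜) 1 A)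
      _ = (k : 𝕜) • A + (A + C) := add_assoc _ _ _
      _ ⊆ (k : 𝕜) • A + (B + C) := Set.add_subset_add_left h
      _ = B + ((k : 𝕜) • A + C) := add_left_comm _ _ _
      _ ⊆ B + ((k : 𝕜) • B + C) := Set.add_subset_add_left ih
      _ = (k : 𝕜) • B + B + C := by rw [← add_assoc, add_comm B]
      _ = ((k : 𝕜) + 1) • B + C := by rw [hB.add_smul k.cast_nonneg zero_le_one, one_smul]

theorem subset_closure_of_eventually_smul_add_subset {ι 𝕜 E : Type*} [NormedField 𝕜]
    [AddCommGroup E] [Module 𝕜 E] [TopologicalSpace E] [IsTopologicalAddGroup E] {A B C : Set E}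
    {l : Filter ι} [l.NeBot] {r : ι → 𝕜} (hr : Tendsto r l (cobounded 𝕜)) (hCne : C.Nonempty)
    (hC : IsVonNBounded 𝕜 C) (h : ∀ᶠ i in l, r i • A + C ⊆ r i • B + C) : A ⊆ closure B := by
  intro a ha
  obtain ⟨c, hc⟩ := hCne
  have exists_approx : ∀ᶠ i in l, ∃ c' ∈ C, a + (r i)⁻¹ • c - (r i)⁻¹ • c' ∈ B := by
    filter_upwards [h, hr.eventually_ne_cobounded 0] with i hi hri
    obtain ⟨_, ⟨b, hb, rfl⟩, c', hc', hsum : r i • b + c' = r i • a + c⟩ :=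
      hi (Set.add_mem_add (Set.smul_mem_smul_set ha) hc)
    have hb_eq : b = a + (r i)⁻¹ • c - (r i)⁻¹ • c' := by
      rw [eq_sub_iff_add_eq]
      simpa only [smul_add, inv_smul_smul₀ hri] using congrArg ((r i)⁻¹ • ·) hsum
    exact ⟨c', hc', hb_eq ▸ hb⟩
  obtain ⟨c', hc'⟩ := exists_approx.choice
  have hr_inv : Tendsto (fun i ↦ (r i)⁻¹) l (𝓝 0) := tendsto_inv₀_cobounded.comp hr
  have hc_lim : Tendsto (fun i ↦ (r i)⁻¹ • c) l (𝓝 0) :=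
    hC.smul_tendsto_zero (.of_forall fun _ ↦ hc) hr_inv
  have hc'_lim : Tendsto (fun i ↦ (r i)⁻¹ • c' i) l (𝓝 0) :=
    hC.smul_tendsto_zero (hc'.mono fun _ hi ↦ hi.1) hr_inv
  have approx_lim : Tendsto (fun i ↦ a + (r i)⁻¹ • c - (r i)⁻¹ • c' i) l (𝓝 a) := by
    simpa only [add_zero, sub_zero] using (hc_lim.const_add a).sub hc'_lim
  exact mem_closure_of_tendsto approx_lim (hc'.mono fun _ hi ↦ hi.2)

theorem minkowski_cancellation_general {E : Type*} [AddCommGroup E] [Module ℝ E]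
    [TopologicalSpace E] [IsTopologicalAddGroup E] {A B C : Set E} (hCne : C.Nonempty)
    (hC : IsVonNBounded ℝ C) (hB : Convex ℝ B) (h : A + C ⊆ B + C) : A ⊆ closure B :=
  subset_closure_of_eventually_smul_add_subset tendsto_natCast_atTop_cobounded hCne hC <|
    (eventually_ge_atTop 1).mono fun _ ↦ natCast_smul_add_subset_of_add_subset hB h

/-- Minkowski cancellation for convex sets: if `A, C ⊆ ℝⁿ` are nonempty compact convex sets,
`B ⊆ ℝⁿ` is closed and convex, and `A ⊕ C ⊆ B ⊕ C`, then `A ⊆ B`. -/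
theorem minkowski_cancellation {n : ℕ} (A B C : Set (Fin n → ℝ))
    (hAne : A.Nonempty) (hCne : C.Nonempty)
    (hAcomp : IsCompact A) (hCcomp : IsCompact C)
    (hAconv : Convex ℝ A) (hCconv : Convex ℝ C)
    (hBclosed : IsClosed B) (hBconv : Convex ℝ B)
    (h : A + C ⊆ B + C) : A ⊆ B :=
  (minkowski_cancellation_general hCne (hCcomp.isVonNBounded ℝ) hBconv h).trans
    hBclosed.closure_subset
end

section
/- (Pontryagin-difference step in the invariance proof.) Let H ∈ ℝ^{n×k}, T ∈ ℝ^{n×k}, G ∈ ℝ^{n×p}, and β ∈ [0,1). If Z(0,H) ⊕ Z(0,G) ⊆ Z(0,T) ⊕ Z(0,βG), then Z(0,H) ⊕ (1−β)·Z(0,G) ⊆ Z(0,T). -/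
open Pointwise

/-!
Since `Z(0,G)` is convex, it equals `(1-β)·Z(0,G) ⊕ β·Z(0,G)`, so the hypothesis reads
`(Z(0,H) ⊕ (1-β)·Z(0,G)) ⊕ β·Z(0,G) ⊆ Z(0,T) ⊕ β·Z(0,G)`, and Rådström's cancellation law removes
the summand `β·Z(0,G)`. To cancel a bounded `B` in `a + B ⊆ T + B` with `T` convex, iterate the
inclusion to `n • a + B ⊆ n • T + B` and divide by `n`: the point `a` differs from a point of `T`
by an element of `n⁻¹ • (B - B)`, which tends to `0`.
-/

open Bornology Filter Topology

section Cancellation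

theorem smul_vadd_subset_smul_add_of_vadd_subset_add {𝕜 E : Type*} [Field 𝕜] [LinearOrder 𝕜]
    [IsStrictOrderedRing 𝕜] [AddCommGroup E] [Module 𝕜 E] {T B : Set E} {a : E}
    (hT : Convex 𝕜 T) (h : a +ᵥ B ⊆ T + B) (n : ℕ) :
    ((n : 𝕜) + 1) • a +ᵥ B ⊆ ((n : 𝕜) + 1) • T + B := by
  induction n with
  | zero => simpa using h
  | succ n ih =>
    push_cast
    set r : 𝕜 := (n : 𝕜) + 1
    have hr : 0 ≤ r := by positivity
    calc (r + 1) • a +ᵥ B = r • a +ᵥ (a +ᵥ B) := by rw [add_smul, one_smul, add_vadd]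
      _ ⊆ r • a +ᵥ (T + B) := Set.vadd_set_mono h
      _ = T + (r • a +ᵥ B) := (add_vadd_comm _ _ _).symm
      _ ⊆ T + (r • T + B) := Set.add_subset_add_left ih
      _ = (r + 1) • T + B := by
        rw [hT.add_smul hr zero_le_one, one_smul, ← add_assoc, add_comm T]

variable {E : Type*} [AddCommGroup E] [Module ℝ E] [TopologicalSpace E]
  [IsTopologicalAddGroup E] [ContinuousSMul ℝ E] {A B T : Set E}

theorem mem_closure_of_vadd_subset_add {a : E} (hT : Convex ℝ T) (hB : IsVonNBounded ℝ B)
    (hB₀ : B.Nonempty) (h : a +ᵥ B ⊆ T + B) : a ∈ closure T := by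
  obtain ⟨b₀, hb₀⟩ := hB₀
  have iterated (n : ℕ) : ∃ t ∈ T, ∃ b ∈ B, ((n : ℝ) + 1) • t + b = ((n : ℝ) + 1) • a + b₀ := by
    obtain ⟨_, ⟨t, ht, rfl⟩, b, hb, hsum⟩ :=
      smul_vadd_subset_smul_add_of_vadd_subset_add hT h n (Set.vadd_mem_vadd_set hb₀)
    exact ⟨t, ht, b, hb, hsum⟩
  choose t ht b hb hsum using iterated
  have t_eq (n : ℕ) : t n = a - (1 / ((n : ℝ) + 1)) • (b n - b₀) := by
    have hn : (n : ℝ) + 1 ≠ 0 := by positivity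
    have hdiff : b n - b₀ = ((n : ℝ) + 1) • (a - t n) := by
      rw [smul_sub, sub_eq_sub_iff_add_eq_add, add_comm, hsum]
    rw [hdiff, smul_smul, one_div_mul_cancel hn, one_smul, sub_sub_cancel]
  have error_tendsto :
      Tendsto (fun n : ℕ => (1 / ((n : ℝ) + 1)) • (b n - b₀)) atTop (𝓝 0) :=
    (hB.sub (isVonNBounded_singleton b₀)).smul_tendsto_zero
      (.of_forall fun n => Set.sub_mem_sub (hb n) rfl) tendsto_one_div_add_atTop_nhds_zero_nat
  have t_tendsto : Tendsto t atTop (𝓝 a) := by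
    simpa only [← t_eq, sub_zero] using error_tendsto.const_sub a
  exact mem_closure_of_tendsto t_tendsto (.of_forall ht)

theorem subset_of_add_subset_add_right_of_isVonNBounded (hT : Convex ℝ T) (hT_closed : IsClosed T)
    (hB : IsVonNBounded ℝ B) (hB₀ : B.Nonempty) (h : A + B ⊆ T + B) : A ⊆ T := fun _ ha =>
  hT_closed.closure_subset <| mem_closure_of_vadd_subset_add hT hB hB₀ <|
    (Set.vadd_set_subset_vadd ha).trans h

theorem pontryagin_step_general (hB : Convex ℝ B) (hB_bdd : IsVonNBounded ℝ B)
    (hT : Convex ℝ T) (hT_closed : IsClosed T) {β : ℝ} (hβ0 : 0 ≤ β) (hβ1 : β ≤ 1)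
    (hsub : A + B ⊆ T + β • B) : A + (1 - β) • B ⊆ T := by
  obtain rfl | hB₀ := B.eq_empty_or_nonempty
  · simp
  refine subset_of_add_subset_add_right_of_isVonNBounded hT hT_closed
    (hB_bdd.image (β • ContinuousLinearMap.id ℝ E)) hB₀.smul_set ?_
  calc A + (1 - β) • B + β • B = A + B := by
        rw [add_assoc, ← hB.add_smul (sub_nonneg.2 hβ1) hβ0, sub_add_cancel, one_smul]
    _ ⊆ T + β • B := hsub

end Cancellation

section Zonotope

variable {n ι : Type*} [Fintype ι]

theorem zonotope_eq_vadd_image_Icc (c : n → ℝ) (G : Matrix n ι ℝ) :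
    zonotope c G = c +ᵥ G.mulVecLin '' Set.Icc (-1) 1 := by
  ext x
  simp [zonotope, Set.mem_vadd_set, abs_le, Pi.le_def, forall_and, eq_comm]

theorem convex_zonotope (c : n → ℝ) (G : Matrix n ι ℝ) : Convex ℝ (zonotope c G) := by
  rw [zonotope_eq_vadd_image_Icc]
  exact ((convex_Icc _ _).linear_image _).vadd c

theorem isCompact_zonotope (c : n → ℝ) (G : Matrix n ι ℝ) : IsCompact (zonotope c G) := by
  rw [zonotope_eq_vadd_image_Icc]
  exact (isCompact_Icc.image (continuous_const.matrix_mulVec continuous_id)).vadd c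

theorem smul_zonotope (r : ℝ) (c : n → ℝ) (G : Matrix n ι ℝ) :
    r • zonotope c G = zonotope (r • c) (r • G) := by
  ext x
  simp [zonotope, Set.mem_smul_set, Matrix.smul_mulVec, eq_comm]

end Zonotope

/-- Pontryagin-difference step: for `β ∈ [0,1)`, if
`Z(0,H) ⊕ Z(0,G) ⊆ Z(0,T) ⊕ Z(0,βG)`, then `Z(0,H) ⊕ (1−β)·Z(0,G) ⊆ Z(0,T)`. -/
theorem pontryagin_step {n k p : ℕ}
    (H T : Matrix (Fin n) (Fin k) ℝ) (G : Matrix (Fin n) (Fin p) ℝ)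
    (β : ℝ) (hβ0 : 0 ≤ β) (hβ1 : β < 1)
    (hsub : zonotope (0 : Fin n → ℝ) H + zonotope (0 : Fin n → ℝ) G ⊆
      zonotope (0 : Fin n → ℝ) T + zonotope (0 : Fin n → ℝ) (β • G)) :
    zonotope (0 : Fin n → ℝ) H + (1 - β) • zonotope (0 : Fin n → ℝ) G ⊆
      zonotope (0 : Fin n → ℝ) T :=
  pontryagin_step_general (convex_zonotope 0 G) ((isCompact_zonotope 0 G).isVonNBounded ℝ)
    (convex_zonotope 0 T) (isCompact_zonotope 0 T).isClosed hβ0 hβ1.le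
    (by simpa only [smul_zonotope, smul_zero] using hsub)
end
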